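/- Let α, β ≥ 0 with α ≠ β, and let F₁(x,y) = (y(1+βxy)/(1+αxy), x(1+αxy)/(1+βxy)) on (0,∞)². Let X and Y be (0,∞)-valued independent random variables with twice-differentiable densities that are strictly positive throughout (0,∞), set (U,V) := F₁(X,Y), and suppose U and V are independent and that (U,V) has the same distribution as (X,Y). Then there exist λ ∈ ℝ and c > 0 such that X ~ GIG(λ, cα, c) and Y ~ GIG(λ, cβ, c). -/

import Mathlib

open MeasureTheory ProbabilityTheory Set

/-- Density of the generalized inverse Gaussian distribution GIG(l, c1, c2):
proportional to `x^(l-1) * exp(-c1*x - c2/x)` on `(0,∞)`. -/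
noncomputable def gigPdf (l c1 c2 : ℝ) : ℝ → ℝ := fun x =>
  if 0 < x then
    x ^ (l - 1) * Real.exp (-(c1 * x) - c2 / x) /
      (∫ t in Set.Ioi (0 : ℝ), t ^ (l - 1) * Real.exp (-(c1 * t) - c2 / t))
  else 0

/-- The transformation F₁ with parameters α, β. -/
noncomputable def F1 (α β : ℝ) : ℝ × ℝ → ℝ × ℝ := fun p =>
  (p.2 * (1 + β * p.1 * p.2) / (1 + α * p.1 * p.2),
   p.1 * (1 + α * p.1 * p.2) / (1 + β * p.1 * p.2))

/-!
`F1 α β` is an involution of the positive quadrant which preserves `x * y` and has Jacobian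
determinant `-1`, so the product density is invariant under it: `φ x + ψ y = φ u + ψ v` for the
log-densities and `(u, v) = F1 α β (x, y)`. Differentiating gives a functional relation between
`A x = x * φ' x` and `B y = y * ψ' y`. In this relation `v → x` as `y → 0`, and the limit of
`y * B y`, computed from any `x`, forces `A x - B x = c * (β - α) * x`. Subtracting the solution
`c / x - c * α * x`, `c / y - c * β * y` leaves a single function `C` in place of `A` and `B`; now
the limit `y → 0` yields `C x + x * C' x = lim C`, whose only solution with a finite limit at `0` is
constant. Hence both densities are multiples of GIG kernels with the same `c`, and for
`c ≤ 0` such a kernel dominates a power of `x`, which is not integrable on `(0, ∞)`.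
-/

open Filter Topology

/-- The open positive quadrant, on which `F1` is an involution. -/
def posQuadrant : Set (ℝ × ℝ) := Ioi 0 ×ˢ Ioi 0

theorem isOpen_posQuadrant : IsOpen posQuadrant := isOpen_Ioi.prod isOpen_Ioi

section InvariantDensities

theorem measurePreserving_restrict_of_abs_det_fderiv_eq_one
    {E : Type*} [NormedAddCommGroup E] [NormedSpace ℝ E] [FiniteDimensional ℝ E]
    [MeasurableSpace E] [BorelSpace E] (μ : Measure E) [μ.IsAddHaarMeasure]
    {f : E → E} {f' : E → E →L[ℝ] E} {s t : Set E} (hs : MeasurableSet s)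
    (hf : Measurable f) (hst : BijOn f s t)
    (hf' : ∀ x ∈ s, HasFDerivWithinAt f (f' x) s x) (hdet : ∀ x ∈ s, |(f' x).det| = 1) :
    MeasurePreserving f (μ.restrict s) (μ.restrict t) := by
  have hdensity : (μ.restrict s).withDensity (fun x ↦ ENNReal.ofReal |(f' x).det|)
      = μ.restrict s := by
    conv_rhs => rw [← withDensity_one (μ := μ.restrict s)]
    refine withDensity_congr_ae ?_
    filter_upwards [ae_restrict_mem hs] with x hx
    simp [hdet x hx]
  refine ⟨hf, ?_⟩
  rw [← hst.image_eq, ← map_withDensity_abs_det_fderiv_eq_addHaar μ hs.nullMeasurableSet hf'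
    hst.injOn, hdensity]

theorem ae_eq_comp_of_map_withDensity_eq_self
    {E : Type*} [MeasurableSpace E] {μ : Measure E} [SigmaFinite μ] {T : E → E} {ρ : E → ENNReal}
    (hT : MeasurePreserving T μ μ) (hinv : ∀ᵐ x ∂μ, T (T x) = x) (hρ : AEMeasurable ρ μ)
    (hmap : Measure.map T (μ.withDensity ρ) = μ.withDensity ρ) :
    ρ =ᵐ[μ] ρ ∘ T := by
  have hρT : AEMeasurable (ρ ∘ T) μ := hρ.comp_quasiMeasurePreserving hT.quasiMeasurePreserving
  rw [← withDensity_eq_iff_of_sigmaFinite hρ hρT]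
  ext s hs
  calc μ.withDensity ρ s
      = ∫⁻ x in T ⁻¹' s, ρ x ∂μ := by
        rw [← hmap, Measure.map_apply hT.measurable hs, withDensity_apply _ (hT.measurable hs)]
    _ = ∫⁻ x in T ⁻¹' s, (ρ ∘ T) (T x) ∂μ := by
        refine setLIntegral_congr_fun_ae (hT.measurable hs) ?_
        filter_upwards [hinv] with x hx _
        rw [Function.comp_apply, hx]
    _ = ∫⁻ x in s, (ρ ∘ T) x ∂μ := by
        have hres := hT.restrict_preimage hs
        rw [← lintegral_map' (by rw [hres.map_eq]; exact hρT.restrict) hres.measurable.aemeasurable,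
          hres.map_eq]
    _ = μ.withDensity (ρ ∘ T) s := (withDensity_apply _ hs).symm

theorem restrict_Ioi_withDensity_eq {μ : Measure ℝ} {ρ : ℝ → ENNReal}
    (hμ : μ = volume.withDensity ρ) (hpos : ∀ᵐ x ∂μ, 0 < x) :
    μ = (volume.restrict (Ioi 0)).withDensity ρ := by
  rw [← restrict_withDensity measurableSet_Ioi, ← hμ]
  exact (Measure.restrict_eq_self_of_ae_mem (s := Ioi 0) hpos).symm

theorem integral_eq_one_of_isProbabilityMeasure_withDensity
    {E : Type*} [MeasurableSpace E] {μ : Measure E} {f : E → ℝ}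
    [IsProbabilityMeasure (μ.withDensity fun x ↦ ENNReal.ofReal (f x))]
    (hf : AEStronglyMeasurable f μ) (hf_nonneg : 0 ≤ᵐ[μ] f) : ∫ x, f x ∂μ = 1 := by
  have htotal := measure_univ (μ := μ.withDensity fun x ↦ ENNReal.ofReal (f x))
  rw [withDensity_apply _ .univ, Measure.restrict_univ] at htotal
  rw [integral_eq_lintegral_of_nonneg_ae hf_nonneg hf, htotal, ENNReal.toReal_one]

end InvariantDensities

section Transformation

variable {α β : ℝ}

theorem mapsTo_F1 (hα : 0 ≤ α) (hβ : 0 ≤ β) : MapsTo (F1 α β) posQuadrant posQuadrant := by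
  rintro ⟨x, y⟩ ⟨hx, hy⟩
  simp only [mem_Ioi] at hx hy
  constructor <;> simp only [F1, mem_Ioi] <;> positivity

theorem F1_fst_mul_F1_snd {x y : ℝ} (hα : 0 ≤ α) (hβ : 0 ≤ β) (hx : 0 ≤ x) (hy : 0 ≤ y) :
    (F1 α β (x, y)).1 * (F1 α β (x, y)).2 = x * y := by
  simp only [F1]
  field_simp

theorem one_add_mul_F1_fst_mul_F1_snd {x y : ℝ} (hα : 0 ≤ α) (hβ : 0 ≤ β) (hx : 0 ≤ x)
    (hy : 0 ≤ y) (k : ℝ) :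
    1 + k * (F1 α β (x, y)).1 * (F1 α β (x, y)).2 = 1 + k * x * y := by
  rw [mul_assoc, F1_fst_mul_F1_snd hα hβ hx hy, mul_assoc]

theorem F1_F1 {x y : ℝ} (hα : 0 ≤ α) (hβ : 0 ≤ β) (hx : 0 ≤ x) (hy : 0 ≤ y) :
    F1 α β (F1 α β (x, y)) = (x, y) := by
  rw [F1.eq_def α β (F1 α β (x, y))]
  simp only [one_add_mul_F1_fst_mul_F1_snd hα hβ hx hy]
  simp only [F1]
  ext <;> field_simp

theorem leftInvOn_F1 (hα : 0 ≤ α) (hβ : 0 ≤ β) : LeftInvOn (F1 α β) (F1 α β) posQuadrant :=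
  fun _ hp ↦ F1_F1 hα hβ (le_of_lt hp.1) (le_of_lt hp.2)

theorem bijOn_F1 (hα : 0 ≤ α) (hβ : 0 ≤ β) : BijOn (F1 α β) posQuadrant posQuadrant :=
  InvOn.bijOn ⟨leftInvOn_F1 hα hβ, leftInvOn_F1 hα hβ⟩
    (mapsTo_F1 hα hβ) (mapsTo_F1 hα hβ)

theorem measurable_F1 : Measurable (F1 α β) := by
  unfold F1
  fun_prop

/-- The Jacobian matrix of `F1` at `p`, with the entries put over a common denominator. -/
noncomputable def F1Jacobian (α β : ℝ) (p : ℝ × ℝ) : Matrix (Fin 2) (Fin 2) ℝ :=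
  !![p.2 ^ 2 * (β - α) / (1 + α * p.1 * p.2) ^ 2,
      (1 + 2 * β * p.1 * p.2 + α * β * (p.1 * p.2) ^ 2) / (1 + α * p.1 * p.2) ^ 2;
    (1 + 2 * α * p.1 * p.2 + α * β * (p.1 * p.2) ^ 2) / (1 + β * p.1 * p.2) ^ 2,
      p.1 ^ 2 * (α - β) / (1 + β * p.1 * p.2) ^ 2]

theorem det_F1Jacobian {x y : ℝ} (hα : 0 ≤ α) (hβ : 0 ≤ β) (hx : 0 ≤ x) (hy : 0 ≤ y) :
    (F1Jacobian α β (x, y)).det = -1 := by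
  rw [F1Jacobian, Matrix.det_fin_two_of]
  field_simp
  ring

theorem hasFDerivAt_F1 {x y : ℝ} (hα : 0 ≤ α) (hβ : 0 ≤ β) (hx : 0 ≤ x) (hy : 0 ≤ y) :
    HasFDerivAt (F1 α β) (Matrix.toLin (.finTwoProd ℝ) (.finTwoProd ℝ)
      (F1Jacobian α β (x, y))).toContinuousLinearMap (x, y) := by
  have hfst : HasFDerivAt (fun q : ℝ × ℝ ↦ q.1) (.fst ℝ ℝ ℝ) (x, y) := hasFDerivAt_fst
  have hsnd : HasFDerivAt (fun q : ℝ × ℝ ↦ q.2) (.snd ℝ ℝ ℝ) (x, y) := hasFDerivAt_snd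
  have hden (k : ℝ) : HasFDerivAt (fun q : ℝ × ℝ ↦ 1 + k * q.1 * q.2) _ (x, y) :=
    ((hfst.const_mul k).mul hsnd).const_add 1
  have hinv (k : ℝ) (hk : 0 ≤ k) : HasFDerivAt (fun q : ℝ × ℝ ↦ (1 + k * q.1 * q.2)⁻¹) _ (x, y) :=
    (hasDerivAt_inv (by positivity : 1 + k * x * y ≠ 0)).comp_hasFDerivAt (x, y) (hden k)
  have hF := ((hsnd.mul (hden β)).mul (hinv α hα)).prodMk ((hfst.mul (hden α)).mul (hinv β hβ))
  refine HasFDerivAt.congr_fderiv (f := F1 α β) hF ?_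
  rw [F1Jacobian, Matrix.toLin_finTwoProd_toContinuousLinearMap]
  ext <;> simp <;> field_simp <;> ring

theorem hasDerivAt_F1_right {x y : ℝ} (hα : 0 ≤ α) (hβ : 0 ≤ β) (hx : 0 ≤ x) (hy : 0 ≤ y) :
    HasDerivAt (fun t ↦ F1 α β (x, t))
      (F1Jacobian α β (x, y) 0 1, F1Jacobian α β (x, y) 1 1) y := by
  have hline : HasDerivAt (fun t : ℝ ↦ (x, t)) (0, 1) y :=
    (hasDerivAt_const y x).prodMk (hasDerivAt_id y)
  have h := (hasFDerivAt_F1 hα hβ hx hy).comp_hasDerivAt y hline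
  rw [F1Jacobian, LinearMap.coe_toContinuousLinearMap', Matrix.toLin_finTwoProd_apply] at h
  simp only [mul_zero, zero_add, mul_one] at h
  exact h

theorem continuousOn_F1 (hα : 0 ≤ α) (hβ : 0 ≤ β) : ContinuousOn (F1 α β) posQuadrant :=
  fun _ hp ↦ (hasFDerivAt_F1 hα hβ (le_of_lt hp.1) (le_of_lt hp.2)).continuousAt.continuousWithinAt

theorem measurePreserving_F1 (hα : 0 ≤ α) (hβ : 0 ≤ β) :
    MeasurePreserving (F1 α β) (volume.restrict posQuadrant) (volume.restrict posQuadrant) := by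
  refine measurePreserving_restrict_of_abs_det_fderiv_eq_one volume
    isOpen_posQuadrant.measurableSet measurable_F1 (bijOn_F1 hα hβ)
    (fun p hp ↦ (hasFDerivAt_F1 hα hβ (le_of_lt hp.1) (le_of_lt hp.2)).hasFDerivWithinAt)
    fun p hp ↦ ?_
  rw [LinearMap.det_toContinuousLinearMap, LinearMap.det_toLin,
    det_F1Jacobian hα hβ (le_of_lt hp.1) (le_of_lt hp.2), abs_neg, abs_one]

theorem eqOn_mul_density_comp_F1 (hα : 0 ≤ α) (hβ : 0 ≤ β) {f g : ℝ → ℝ}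
    (hf : ContinuousOn f (Ioi 0)) (hg : ContinuousOn g (Ioi 0))
    (hf_pos : ∀ x ∈ Ioi (0 : ℝ), 0 < f x) (hg_pos : ∀ x ∈ Ioi (0 : ℝ), 0 < g x)
    {μ ν : Measure ℝ}
    (hμ : μ = (volume.restrict (Ioi 0)).withDensity fun x ↦ ENNReal.ofReal (f x))
    (hν : ν = (volume.restrict (Ioi 0)).withDensity fun x ↦ ENNReal.ofReal (g x))
    (hmap : Measure.map (F1 α β) (μ.prod ν) = μ.prod ν) :
    EqOn (fun p ↦ f p.1 * g p.2) (fun p ↦ f (F1 α β p).1 * g (F1 α β p).2) posQuadrant := by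
  set h : ℝ × ℝ → ℝ := fun p ↦ f p.1 * g p.2
  have h_nonneg : ∀ p ∈ posQuadrant, 0 ≤ h p := fun p hp ↦
    (mul_pos (hf_pos _ hp.1) (hg_pos _ hp.2)).le
  have hcont : ContinuousOn h posQuadrant :=
    (hf.comp continuousOn_fst fun _ hp ↦ hp.1).mul (hg.comp continuousOn_snd fun _ hp ↦ hp.2)
  have hQ : MeasurableSet posQuadrant := isOpen_posQuadrant.measurableSet
  have hjoint : μ.prod ν = (volume.restrict posQuadrant).withDensity (ENNReal.ofReal ∘ h) := by
    rw [hμ, hν, prod_withDensity₀ (hf.aemeasurable measurableSet_Ioi).ennreal_ofReal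
      (hg.aemeasurable measurableSet_Ioi).ennreal_ofReal, Measure.prod_restrict]
    refine withDensity_congr_ae ?_
    filter_upwards [ae_restrict_mem hQ] with p hp
    exact (ENNReal.ofReal_mul (hf_pos _ hp.1).le).symm
  rw [hjoint] at hmap
  have hofReal := ENNReal.continuous_ofReal.comp_continuousOn hcont
  have hae := ae_eq_comp_of_map_withDensity_eq_self (measurePreserving_F1 hα hβ)
    ((ae_restrict_mem hQ).mono fun _ hp ↦ leftInvOn_F1 hα hβ hp) (hofReal.aemeasurable hQ) hmap
  have hcomp := hofReal.comp (continuousOn_F1 hα hβ) (mapsTo_F1 hα hβ)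
  intro p hp
  exact (ENNReal.ofReal_eq_ofReal_iff (h_nonneg p hp) (h_nonneg _ (mapsTo_F1 hα hβ hp))).mp
    (Measure.eqOn_open_of_ae_eq hae isOpen_posQuadrant hofReal hcomp hp)

end Transformation

section ScoreRelation

variable {α β : ℝ} {A B : ℝ → ℝ}

/-- The relation satisfied by `A x = x * φ' x` and `B y = y * ψ' y` when `φ x + ψ y` is invariant
under `F1 α β`. For `φ`, `ψ` log-densities, `A` and `B` are the scores in the logarithmic scale.
Denominators are cleared. -/
def ScoreRelation (α β : ℝ) (A B : ℝ → ℝ) : Prop :=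
  ∀ x y, 0 < x → 0 < y →
    (1 + α * x * y) * (1 + β * x * y) * (A x - B (F1 α β (x, y)).2) =
      (α - β) * (x * y) * (A x - B y)

theorem scoreRelation_of_add_comp_F1 (hα : 0 ≤ α) (hβ : 0 ≤ β) {φ ψ φ' ψ' : ℝ → ℝ}
    (hφ : ∀ x, 0 < x → HasDerivAt φ (φ' x) x) (hψ : ∀ x, 0 < x → HasDerivAt ψ (ψ' x) x)
    (hinv : EqOn (fun p ↦ φ p.1 + ψ p.2) (fun p ↦ φ (F1 α β p).1 + ψ (F1 α β p).2) posQuadrant) :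
    ScoreRelation α β (fun x ↦ x * φ' x) (fun y ↦ y * ψ' y) := by
  have hderiv (u v : ℝ) (hu : 0 < u) (hv : 0 < v) :
      ψ' v = φ' (F1 α β (u, v)).1 * F1Jacobian α β (u, v) 0 1
        + ψ' (F1 α β (u, v)).2 * F1Jacobian α β (u, v) 1 1 := by
    have hF := hasDerivAt_F1_right hα hβ hu.le hv.le
    obtain ⟨hpos₁, hpos₂⟩ := mapsTo_F1 hα hβ (⟨hu, hv⟩ : (u, v) ∈ posQuadrant)
    have hleft : HasDerivAt (fun t ↦ φ u + ψ t) (ψ' v) v := (hψ v hv).const_add _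
    refine hleft.unique <| (((hφ _ hpos₁).comp v hF.fst).add
      ((hψ _ hpos₂).comp v hF.snd)).congr_of_eventuallyEq ?_
    filter_upwards [lt_mem_nhds hv] with t ht
    exact hinv (⟨hu, ht⟩ : (u, t) ∈ posQuadrant)
  intro x y hx hy
  obtain ⟨hu, hv⟩ := mapsTo_F1 hα hβ (⟨hx, hy⟩ : (x, y) ∈ posQuadrant)
  -- Differentiating at `F1 (x, y)` rather than at `(x, y)` keeps `φ'` at `(F1 (x, y)).1` out of the
  -- relation, since `F1` maps that point back to `(x, y)`.
  have h := hderiv _ _ hu hv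
  rw [Prod.mk.eta, F1_F1 hα hβ hx.le hy.le] at h
  beta_reduce
  rw [h]
  simp only [F1Jacobian, mul_assoc, F1_fst_mul_F1_snd hα hβ hx.le hy.le, Matrix.of_apply,
    Matrix.cons_val', Matrix.cons_val_zero, Matrix.cons_val_one, Matrix.cons_val_fin_one]
  simp only [F1]
  field_simp
  ring

theorem scoreRelation_of_mul_comp_F1 (hα : 0 ≤ α) (hβ : 0 ≤ β) {f g : ℝ → ℝ}
    (hf : DifferentiableOn ℝ f (Ioi 0)) (hg : DifferentiableOn ℝ g (Ioi 0))
    (hf_pos : ∀ x ∈ Ioi (0 : ℝ), 0 < f x) (hg_pos : ∀ x ∈ Ioi (0 : ℝ), 0 < g x)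
    (hinv : EqOn (fun p ↦ f p.1 * g p.2) (fun p ↦ f (F1 α β p).1 * g (F1 α β p).2) posQuadrant) :
    ScoreRelation α β (fun x ↦ x * (deriv f x / f x)) (fun y ↦ y * (deriv g y / g y)) := by
  have hlog {h : ℝ → ℝ} (hh : DifferentiableOn ℝ h (Ioi 0)) (hpos : ∀ x ∈ Ioi (0 : ℝ), 0 < h x)
      (x : ℝ) (hx : 0 < x) : HasDerivAt (fun t ↦ Real.log (h t)) (deriv h x / h x) x :=
    (hh.differentiableAt (Ioi_mem_nhds hx)).hasDerivAt.log (hpos x hx).ne'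
  refine scoreRelation_of_add_comp_F1 hα hβ (hlog hf hf_pos) (hlog hg hg_pos) fun p hp ↦ ?_
  have hFp := mapsTo_F1 hα hβ hp
  have h := congrArg Real.log (hinv hp)
  rwa [Real.log_mul (hf_pos _ hp.1).ne' (hg_pos _ hp.2).ne',
    Real.log_mul (hf_pos _ hFp.1).ne' (hg_pos _ hFp.2).ne'] at h

theorem ScoreRelation.sub {A' B' : ℝ → ℝ} (h : ScoreRelation α β A B)
    (h' : ScoreRelation α β A' B') :
    ScoreRelation α β (fun x ↦ A x - A' x) (fun y ↦ B y - B' y) := by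
  intro x y hx hy
  linear_combination h x y hx hy - h' x y hx hy

theorem scoreRelation_gig (hα : 0 ≤ α) (hβ : 0 ≤ β) (c : ℝ) :
    ScoreRelation α β (fun x ↦ c / x - c * α * x) (fun y ↦ c / y - c * β * y) := by
  intro x y hx hy
  simp only [F1]
  field_simp
  ring

theorem hasDerivAt_F1_snd_zero (hα : 0 ≤ α) (hβ : 0 ≤ β) {x : ℝ} (hx : 0 ≤ x) :
    HasDerivAt (fun t ↦ (F1 α β (x, t)).2) (x ^ 2 * (α - β)) 0 := by
  simpa [F1Jacobian, Function.comp_def] using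
    hasFDerivAt_snd.comp_hasDerivAt 0 (hasDerivAt_F1_right hα hβ hx le_rfl)

theorem tendsto_one_add_mul_one_add_mul (α β x : ℝ) :
    Tendsto (fun y ↦ (1 + α * x * y) * (1 + β * x * y)) (𝓝[>] 0) (𝓝 1) := by
  have hcont : Continuous fun y : ℝ ↦ (1 + α * x * y) * (1 + β * x * y) := by fun_prop
  simpa using (hcont.tendsto 0).mono_left nhdsWithin_le_nhds

theorem ScoreRelation.tendsto_mul_right (hα : 0 ≤ α) (hβ : 0 ≤ β) (hαβ : α ≠ β)
    (h : ScoreRelation α β A B) {x : ℝ} (hx : 0 < x) (hB : ContinuousAt B x) :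
    Tendsto (fun y ↦ y * B y) (𝓝[>] 0) (𝓝 ((A x - B x) / ((β - α) * x))) := by
  have hβα : β - α ≠ 0 := sub_ne_zero.mpr hαβ.symm
  have hBv : Tendsto (fun y ↦ B (F1 α β (x, y)).2) (𝓝[>] 0) (𝓝 (B x)) := by
    have hF := (hasDerivAt_F1_snd_zero hα hβ hx.le).continuousAt.tendsto
    simp only [F1, mul_zero, add_zero, mul_one, div_one] at hF
    exact hB.tendsto.comp (hF.mono_left nhdsWithin_le_nhds)
  have hy₀ : Tendsto (fun y : ℝ ↦ y) (𝓝[>] 0) (𝓝 0) := tendsto_id.mono_left nhdsWithin_le_nhds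
  have hlim := (((tendsto_one_add_mul_one_add_mul α β x).mul (hBv.const_sub (A x))).div_const
    ((β - α) * x)).add (hy₀.mul_const (A x))
  rw [one_mul, zero_mul, add_zero] at hlim
  refine hlim.congr' ?_
  filter_upwards [self_mem_nhdsWithin] with y hy
  rw [h x y hx hy]
  field_simp
  ring

theorem ScoreRelation.exists_sub_eq (hα : 0 ≤ α) (hβ : 0 ≤ β) (hαβ : α ≠ β)
    (h : ScoreRelation α β A B) (hB : ContinuousOn B (Ioi 0)) :
    ∃ c, ∀ x, 0 < x → A x - B x = c * (β - α) * x := by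
  have hβα : β - α ≠ 0 := sub_ne_zero.mpr hαβ.symm
  have hlim (x : ℝ) (hx : 0 < x) :=
    h.tendsto_mul_right hα hβ hαβ hx (hB.continuousAt (Ioi_mem_nhds hx))
  refine ⟨(A 1 - B 1) / ((β - α) * 1), fun x hx ↦ ?_⟩
  have heq := tendsto_nhds_unique (hlim x hx) (hlim 1 one_pos)
  rw [div_eq_iff (mul_ne_zero hβα hx.ne')] at heq
  rw [heq, mul_assoc]

theorem ScoreRelation.tendsto_self (hα : 0 ≤ α) (hβ : 0 ≤ β) (hαβ : α ≠ β) {C : ℝ → ℝ}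
    (h : ScoreRelation α β C C) {x : ℝ} (hx : 0 < x) (hC : DifferentiableAt ℝ C x) :
    Tendsto C (𝓝[>] 0) (𝓝 (C x + x * deriv C x)) := by
  have hαβ' : α - β ≠ 0 := sub_ne_zero.mpr hαβ
  have hF₀ : (F1 α β (x, 0)).2 = x := by simp [F1]
  have hcomp : HasDerivAt (fun y ↦ C (F1 α β (x, y)).2) (deriv C x * (x ^ 2 * (α - β))) 0 :=
    HasDerivAt.comp (h₂ := C) 0 (by simpa only [hF₀] using hC.hasDerivAt)
      (hasDerivAt_F1_snd_zero hα hβ hx.le)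
  have hslope := hcomp.tendsto_slope_zero_right
  simp only [zero_add, hF₀, smul_eq_mul] at hslope
  have hlim := ((hslope.mul (tendsto_one_add_mul_one_add_mul α β x)).div_const
    ((α - β) * x)).const_add (C x)
  have hval : deriv C x * (x ^ 2 * (α - β)) * 1 / ((α - β) * x) = x * deriv C x := by
    field_simp
  rw [hval] at hlim
  refine hlim.congr' ?_
  filter_upwards [self_mem_nhdsWithin] with y hy
  have hy : 0 < y := hy
  field_simp
  linear_combination -h x y hx hy

theorem eq_of_tendsto_of_add_mul_deriv_eq {C : ℝ → ℝ} {L : ℝ} (hC : DifferentiableOn ℝ C (Ioi 0))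
    (hlim : Tendsto C (𝓝[>] 0) (𝓝 L)) (hode : ∀ x, 0 < x → C x + x * deriv C x = L)
    {x : ℝ} (hx : 0 < x) : C x = L := by
  have hderiv : ∀ t ∈ Ioi (0 : ℝ), HasDerivAt (fun t ↦ t * (C t - L)) 0 t := fun t ht ↦ by
    convert! (hasDerivAt_id t).mul
      ((hC.differentiableAt (Ioi_mem_nhds ht)).hasDerivAt.sub_const L) using 1
    simp only [id_eq]
    linear_combination -hode t ht
  have hconst : ∀ t ∈ Ioi (0 : ℝ), x * (C x - L) = t * (C t - L) := fun t ht ↦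
    isOpen_Ioi.is_const_of_deriv_eq_zero isPreconnected_Ioi
      (fun s hs ↦ (hderiv s hs).differentiableAt.differentiableWithinAt)
      (fun s hs ↦ (hderiv s hs).deriv) hx ht
  have hzero : Tendsto (fun t ↦ t * (C t - L)) (𝓝[>] 0) (𝓝 0) := by
    simpa using (tendsto_id.mono_left nhdsWithin_le_nhds).mul (hlim.sub_const L)
  have hprod : x * (C x - L) = 0 := tendsto_nhds_unique
    (tendsto_const_nhds.congr' (eventually_mem_nhdsWithin.mono hconst)) hzero
  exact sub_eq_zero.mp ((mul_eq_zero.mp hprod).resolve_left hx.ne')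

theorem ScoreRelation.exists_eq_const (hα : 0 ≤ α) (hβ : 0 ≤ β) (hαβ : α ≠ β) {C : ℝ → ℝ}
    (h : ScoreRelation α β C C) (hC : DifferentiableOn ℝ C (Ioi 0)) :
    ∃ L, ∀ x, 0 < x → C x = L := by
  have hlim (x : ℝ) (hx : 0 < x) :=
    h.tendsto_self hα hβ hαβ hx (hC.differentiableAt (Ioi_mem_nhds hx))
  exact ⟨_, fun x hx ↦ eq_of_tendsto_of_add_mul_deriv_eq hC (hlim 1 one_pos)
    (fun t ht ↦ tendsto_nhds_unique (hlim t ht) (hlim 1 one_pos)) hx⟩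

theorem ScoreRelation.exists_eq_gig (hα : 0 ≤ α) (hβ : 0 ≤ β) (hαβ : α ≠ β)
    (h : ScoreRelation α β A B) (hB : DifferentiableOn ℝ B (Ioi 0)) :
    ∃ L c, ∀ x, 0 < x → A x = L - c * α * x + c / x ∧ B x = L - c * β * x + c / x := by
  obtain ⟨c, hc⟩ := h.exists_sub_eq hα hβ hαβ hB.continuousOn
  set C : ℝ → ℝ := fun y ↦ B y - (c / y - c * β * y)
  have hsub := h.sub (scoreRelation_gig hα hβ c)
  have hC : ScoreRelation α β C C := by
    intro x y hx hy
    have hA : A x - (c / x - c * α * x) = C x := by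
      linear_combination hc x hx
    simpa only [hA] using hsub x y hx hy
  have hC_diff : DifferentiableOn ℝ C (Ioi 0) := hB.sub <|
    ((differentiableOn_const c).div differentiableOn_id fun _ hx ↦ ne_of_gt hx).sub (by fun_prop)
  obtain ⟨L, hL⟩ := hC.exists_eq_const hα hβ hαβ hC_diff
  refine ⟨L, c, fun x hx ↦ ⟨?_, ?_⟩⟩
  · linear_combination hc x hx + hL x hx
  · linear_combination hL x hx

end ScoreRelation

section Integration

/-- The unnormalized density of GIG(l, a, c); its integral is the normalizing constant
of `gigPdf l a c`. -/
noncomputable def gigKernel (l a c x : ℝ) : ℝ := x ^ (l - 1) * Real.exp (-(a * x) - c / x)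

theorem exists_eq_mul_gigKernel {l a c : ℝ} {f f' : ℝ → ℝ} (hf : ∀ x, 0 < x → HasDerivAt f (f' x) x)
    (hf_pos : ∀ x, 0 < x → 0 < f x)
    (hscore : ∀ x, 0 < x → x * (f' x / f x) = l - 1 - a * x + c / x) :
    ∃ K, ∀ x, 0 < x → f x = K * gigKernel l a c x := by
  have hlog (x : ℝ) (hx : 0 < x) : HasDerivAt (fun t ↦ Real.log (f t)) (f' x / f x) x :=
    (hf x hx).log (hf_pos x hx).ne'
  have hgig (x : ℝ) (hx : 0 < x) :
      HasDerivAt (fun t ↦ (l - 1) * Real.log t - a * t - c / t) (f' x / f x) x := by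
    convert! (((Real.hasDerivAt_log hx.ne').const_mul (l - 1)).sub
      ((hasDerivAt_id x).const_mul a)).sub ((hasDerivAt_inv hx.ne').const_mul c) using 1
    have h := hscore x hx
    field_simp at h ⊢
    linear_combination h
  obtain ⟨k, hk⟩ := isOpen_Ioi.exists_eq_add_of_deriv_eq isPreconnected_Ioi
    (fun x hx ↦ (hlog x hx).differentiableAt.differentiableWithinAt)
    (fun x hx ↦ (hgig x hx).differentiableAt.differentiableWithinAt)
    (fun x hx ↦ (hlog x hx).deriv.trans (hgig x hx).deriv.symm)
  refine ⟨Real.exp k, fun x hx ↦ ?_⟩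
  have hlogx : Real.log (f x) = (l - 1) * Real.log x - a * x - c / x + k := hk hx
  rw [← Real.exp_log (hf_pos x hx), hlogx, gigKernel, Real.rpow_def_of_pos hx, ← Real.exp_add,
    ← Real.exp_add]
  ring_nf

theorem not_integrableOn_gigKernel {l a c : ℝ} (ha : a ≤ 0) (hc : c ≤ 0) :
    ¬ IntegrableOn (gigKernel l a c) (Ioi 0) := by
  refine fun hint ↦ not_integrableOn_Ioi_rpow (l - 1) (Integrable.mono' hint ?_ ?_)
  · exact (continuousOn_id.rpow_const fun x hx ↦ .inl (ne_of_gt hx)).aestronglyMeasurable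
      measurableSet_Ioi
  · filter_upwards [ae_restrict_mem measurableSet_Ioi] with x hx
    have hx : 0 < x := hx
    have hax : a * x ≤ 0 := mul_nonpos_of_nonpos_of_nonneg ha hx.le
    have hcx : c / x ≤ 0 := div_nonpos_of_nonpos_of_nonneg hc hx.le
    rw [Real.norm_of_nonneg (by positivity)]
    exact le_mul_of_one_le_right (by positivity) (Real.one_le_exp (by linarith))

theorem gigPdf_of_pos {l a c x : ℝ} (hx : 0 < x) :
    gigPdf l a c x = gigKernel l a c x / ∫ t in Ioi (0 : ℝ), gigKernel l a c t :=
  if_pos hx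

theorem withDensity_gigPdf (l a c : ℝ) :
    volume.withDensity (fun x ↦ ENNReal.ofReal (gigPdf l a c x)) =
      (volume.restrict (Ioi 0)).withDensity fun x ↦ ENNReal.ofReal (gigPdf l a c x) := by
  rw [← withDensity_indicator measurableSet_Ioi]
  congr 1 with x
  by_cases hx : 0 < x
  · rw [indicator_of_mem (mem_Ioi.mpr hx)]
  · rw [indicator_of_notMem (by simpa using hx), gigPdf, if_neg hx, ENNReal.ofReal_zero]

theorem pos_of_integral_const_mul_gigKernel_eq_one {l a c K : ℝ} (ha : 0 ≤ a)
    (hint : ∫ x in Ioi (0 : ℝ), K * gigKernel l (c * a) c x = 1) : 0 < c := by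
  by_contra! hc
  have hK : K ≠ 0 := by
    rintro rfl
    simp at hint
  exact not_integrableOn_gigKernel (l := l) (mul_nonpos_of_nonpos_of_nonneg hc ha) hc
    ((integrable_const_mul_iff hK.isUnit _).mp (integrable_of_integral_eq_one hint))

theorem const_mul_gigKernel_eq_gigPdf {l a c K x : ℝ}
    (hint : ∫ x in Ioi (0 : ℝ), K * gigKernel l a c x = 1) (hx : 0 < x) :
    K * gigKernel l a c x = gigPdf l a c x := by
  rw [integral_const_mul] at hint
  rw [gigPdf_of_pos hx, eq_div_iff (right_ne_zero_of_mul_eq_one hint)]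
  linear_combination gigKernel l a c x * hint

theorem eq_withDensity_gigPdf {μ : Measure ℝ} [IsProbabilityMeasure μ] {f : ℝ → ℝ} {l a c : ℝ}
    (ha : 0 ≤ a) (hμ : μ = (volume.restrict (Ioi 0)).withDensity fun x ↦ ENNReal.ofReal (f x))
    (hf : DifferentiableOn ℝ f (Ioi 0)) (hf_pos : ∀ x ∈ Ioi (0 : ℝ), 0 < f x)
    (hscore : ∀ x, 0 < x → x * (deriv f x / f x) = l - 1 - c * a * x + c / x) :
    0 < c ∧ μ = volume.withDensity fun x ↦ ENNReal.ofReal (gigPdf l (c * a) c x) := by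
  obtain ⟨K, hK⟩ := exists_eq_mul_gigKernel
    (fun x hx ↦ (hf.differentiableAt (Ioi_mem_nhds hx)).hasDerivAt) hf_pos hscore
  have hint : ∫ x in Ioi (0 : ℝ), K * gigKernel l (c * a) c x = 1 := by
    rw [← setIntegral_congr_fun measurableSet_Ioi hK]
    subst hμ
    exact integral_eq_one_of_isProbabilityMeasure_withDensity
      (hf.continuousOn.aestronglyMeasurable measurableSet_Ioi)
      ((ae_restrict_mem measurableSet_Ioi).mono fun x hx ↦ (hf_pos x hx).le)
  refine ⟨pos_of_integral_const_mul_gigKernel_eq_one ha hint, ?_⟩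
  rw [hμ, withDensity_gigPdf]
  refine withDensity_congr_ae ?_
  filter_upwards [ae_restrict_mem measurableSet_Ioi] with x hx
  rw [hK x hx, const_mul_gigKernel_eq_gigPdf hint hx]

end Integration

theorem gig_stationary_characterization_general
    {Ω : Type*} [MeasurableSpace Ω] {P : Measure Ω} [IsProbabilityMeasure P]
    {α β : ℝ} (hα : 0 ≤ α) (hβ : 0 ≤ β) (hαβ : α ≠ β)
    {X Y : Ω → ℝ} (hXm : AEMeasurable X P) (hYm : AEMeasurable Y P)
    (hXpos : ∀ᵐ ω ∂P, 0 < X ω) (hYpos : ∀ᵐ ω ∂P, 0 < Y ω) (hIndep : IndepFun X Y P)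
    {fX fY : ℝ → ℝ}
    (hfX : Measure.map X P = volume.withDensity fun x ↦ ENNReal.ofReal (fX x))
    (hfY : Measure.map Y P = volume.withDensity fun x ↦ ENNReal.ofReal (fY x))
    (hfXpos : ∀ x ∈ Ioi (0 : ℝ), 0 < fX x) (hfYpos : ∀ x ∈ Ioi (0 : ℝ), 0 < fY x)
    (hfXdiff : DifferentiableOn ℝ fX (Ioi 0)) (hfYdiff : DifferentiableOn ℝ fY (Ioi 0))
    (hfYdiff' : DifferentiableOn ℝ (deriv fY) (Ioi 0))
    (hSameDist : Measure.map (fun ω ↦ F1 α β (X ω, Y ω)) P = Measure.map (fun ω ↦ (X ω, Y ω)) P) :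
    ∃ l c : ℝ, 0 < c ∧
      Measure.map X P = volume.withDensity (fun x ↦ ENNReal.ofReal (gigPdf l (c * α) c x)) ∧
      Measure.map Y P = volume.withDensity (fun x ↦ ENNReal.ofReal (gigPdf l (c * β) c x)) := by
  have hX := restrict_Ioi_withDensity_eq hfX ((ae_map_iff hXm measurableSet_Ioi).mpr hXpos)
  have hY := restrict_Ioi_withDensity_eq hfY ((ae_map_iff hYm measurableSet_Ioi).mpr hYpos)
  have hmap : Measure.map (F1 α β) ((Measure.map X P).prod (Measure.map Y P)) =
      (Measure.map X P).prod (Measure.map Y P) := by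
    rw [← (indepFun_iff_map_prod_eq_prod_map_map hXm hYm).mp hIndep,
      AEMeasurable.map_map_of_aemeasurable measurable_F1.aemeasurable (hXm.prodMk hYm)]
    exact hSameDist
  have hdens := eqOn_mul_density_comp_F1 hα hβ hfXdiff.continuousOn hfYdiff.continuousOn
    hfXpos hfYpos hX hY hmap
  have hrel := scoreRelation_of_mul_comp_F1 hα hβ hfXdiff hfYdiff hfXpos hfYpos hdens
  obtain ⟨L, c, hLc⟩ := hrel.exists_eq_gig hα hβ hαβ <|
    differentiableOn_id.mul (hfYdiff'.div hfYdiff fun x hx ↦ (hfYpos x hx).ne')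
  have := Measure.isProbabilityMeasure_map hXm
  have := Measure.isProbabilityMeasure_map hYm
  obtain ⟨hc, hXgig⟩ := eq_withDensity_gigPdf (l := L + 1) hα hX hfXdiff hfXpos fun x hx ↦ by
    rw [(hLc x hx).1, add_sub_cancel_right]
  obtain ⟨-, hYgig⟩ := eq_withDensity_gigPdf (l := L + 1) hβ hY hfYdiff hfYpos fun x hx ↦ by
    rw [(hLc x hx).2, add_sub_cancel_right]
  exact ⟨L + 1, c, hc, hXgig, hYgig⟩

theorem gig_stationary_characterization
    {Ω : Type*} [MeasureSpace Ω] [IsProbabilityMeasure (ℙ : Measure Ω)]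
    (α β : ℝ) (hα : 0 ≤ α) (hβ : 0 ≤ β) (hαβ : α ≠ β)
    (X Y : Ω → ℝ) (hXm : Measurable X) (hYm : Measurable Y)
    (hXpos : ∀ ω, 0 < X ω) (hYpos : ∀ ω, 0 < Y ω)
    (hIndep : IndepFun X Y ℙ)
    (fX fY : ℝ → ℝ)
    (hfX : Measure.map X ℙ = volume.withDensity (fun x => ENNReal.ofReal (fX x)))
    (hfY : Measure.map Y ℙ = volume.withDensity (fun x => ENNReal.ofReal (fY x)))
    (hfXpos : ∀ x ∈ Ioi (0 : ℝ), 0 < fX x)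
    (hfYpos : ∀ x ∈ Ioi (0 : ℝ), 0 < fY x)
    (hfXdiff : ∀ x ∈ Ioi (0 : ℝ),
      DifferentiableAt ℝ fX x ∧ DifferentiableAt ℝ (deriv fX) x)
    (hfYdiff : ∀ x ∈ Ioi (0 : ℝ),
      DifferentiableAt ℝ fY x ∧ DifferentiableAt ℝ (deriv fY) x)
    (hUVindep :
      IndepFun (fun ω => (F1 α β (X ω, Y ω)).1) (fun ω => (F1 α β (X ω, Y ω)).2) ℙ)
    (hSameDist :
      Measure.map (fun ω => F1 α β (X ω, Y ω)) ℙ = Measure.map (fun ω => (X ω, Y ω)) ℙ) :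
    ∃ (l c : ℝ), 0 < c ∧
      Measure.map X ℙ =
        volume.withDensity (fun x => ENNReal.ofReal (gigPdf l (c * α) c x)) ∧
      Measure.map Y ℙ =
        volume.withDensity (fun x => ENNReal.ofReal (gigPdf l (c * β) c x)) :=
  gig_stationary_characterization_general hα hβ hαβ hXm.aemeasurable hYm.aemeasurable
    (.of_forall hXpos) (.of_forall hYpos) hIndep hfX hfY hfXpos hfYpos
    (fun x hx ↦ (hfXdiff x hx).1.differentiableWithinAt)
    (fun x hx ↦ (hfYdiff x hx).1.differentiableWithinAt)
    (fun x hx ↦ (hfYdiff x hx).2.differentiableWithinAt) hSameDist
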